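/- arXiv:2105.14202 — 2 statements merged into one kernel-verified Lean document; each statement's English description precedes it below -/
import Mathlib

section
/- Universal approximation of width-bounded AdderNets: Let d ∈ ℕ, let K ⊆ ℝ^d be a compact set, and let f: ℝ^d → ℝ be integrable on K. Then for every ε > 0 there exist n ∈ ℕ and adder layers L₁, L₂, …, L_n, where L₁ has input dimension d, L_n has output dimension 1, every intermediate dimension is at most 2(d + 5), such that the deep AdderNet A = L_n ∘ ReLU ∘ L_{n−1} ∘ ⋯ ∘ ReLU ∘ L₁ (with ReLU applied componentwise between consecutive layers) satisfies ∫_K | f(x) − A(x) | dx ≤ ε, the integral being with respect to Lebesgue measure. -/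
/-!
Deep AdderNets of width `2(d + 5)` are dense in `L¹(K)` for the following reason.

*Approximating functions.* Compactly supported continuous functions are dense in `L¹(K)`, so it
is enough to approximate such a `g` uniformly on `K`. For a large slope `L` and a fine finite net
`t ⊆ K`, the McShane-type function `x ↦ min_{p ∈ t} (g p + L ‖p - x‖₁)` is uniformly close to `g`
on `K` (`exists_uniform_approx`): uniform continuity and boundedness of `g` give
`g x - g y ≤ η + L ‖x - y‖₁`, which yields the lower bound, and the net point close to `x` yields
the upper bound. The building blocks `‖p - x‖₁` are exactly what adder layers compute.

*Computing them in bounded width.* The hidden neurons are organised as `d + 2` nonnegative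
registers, each stored in two identical copies (`IsState`). As register values lie in some `[0, R]`,
the two copies of a register with value `t` contribute `|w₁ - t| + |w₂ - t|` to an adder neuron,
and suitable `w₁, w₂` make this `2t`, `-2t`, `0` or `2|p - t|` up to a constant (`IsElem`). Hence a
neuron can copy a register, subtract two registers, ignore registers, or compute an `ℓ¹` distance
of some registers (`IsNeuron`).
The registers hold the (shifted) input `x`, a running minimum `m` and a scratch value `u`. A new
function `h = c + ‖p - x‖₁` is absorbed into the minimum by two layers, `u ← ReLU (m - h)` and
`m ← m - u` (`exists_state_min`).
-/

open MeasureTheory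

/-- An adder layer with input dimension `p` and output dimension `q`:
`L(x)ᵢ = aᵢ · ‖Wᵢ - x‖₁ + bᵢ`. -/
def IsAdderLayer {p q : ℕ} (L : (Fin p → ℝ) → Fin q → ℝ) : Prop :=
  ∃ (W : Fin q → Fin p → ℝ) (a b : Fin q → ℝ),
    ∀ (x : Fin p → ℝ) (i : Fin q), L x i = a i * (∑ j, |W i j - x j|) + b i

/-- A deep AdderNet `Lₙ ∘ ReLU ∘ L_{n-1} ∘ ⋯ ∘ ReLU ∘ L₁` on inputs in `ℝ^d` whose
intermediate dimensions are all bounded by `w`. -/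
inductive IsDeepAdderNet (d w : ℕ) : {q : ℕ} → ((Fin d → ℝ) → Fin q → ℝ) → Prop
  | single {q : ℕ} (L : (Fin d → ℝ) → Fin q → ℝ) :
      IsAdderLayer L → IsDeepAdderNet d w L
  | comp {p q : ℕ} (A : (Fin d → ℝ) → Fin p → ℝ) (L : (Fin p → ℝ) → Fin q → ℝ) :
      IsDeepAdderNet d w A → p ≤ w → IsAdderLayer L →
      IsDeepAdderNet d w (fun x => L (fun i => max (A x i) 0))

/-! ### Neurons reading duplicated registers -/

/-- `φ` is, up to an additive constant, the contribution `|w₁ - t| + |w₂ - t|` that two copies of a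
register with value `t ∈ [0, R]` make to an adder neuron. -/
def IsElem (R : ℝ) (φ : ℝ → ℝ) : Prop :=
  ∃ w₁ w₂ e : ℝ, ∀ t, 0 ≤ t → t ≤ R → φ t = |w₁ - t| + |w₂ - t| + e

lemma isElem_two_mul (R : ℝ) : IsElem R (fun t => 2 * t) :=
  ⟨0, 0, 0, fun t h0 _ => by
    rw [abs_of_nonpos (by linarith)]; ring⟩

lemma isElem_neg_two_mul (R : ℝ) : IsElem R (fun t => -(2 * t)) :=
  ⟨R, R, -2 * R, fun t _ h1 => by
    rw [abs_of_nonneg (by linarith)]; ring⟩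

lemma isElem_zero (R : ℝ) : IsElem R (fun _ => 0) :=
  ⟨0, R, -R, fun t h0 h1 => by
    rw [abs_of_nonneg (a := R - t) (by linarith), abs_of_nonpos (by linarith)]; ring⟩

lemma isElem_abs (R p : ℝ) : IsElem R (fun t => 2 * |p - t|) :=
  ⟨p, p, 0, fun t _ _ => by ring⟩

/-- On register contents `y ∈ [0, R]^κ`, the function `g` is computed by one adder neuron reading
two copies of every register. -/
def IsNeuron {κ : Type} [Fintype κ] (R : ℝ) (g : (κ → ℝ) → ℝ) : Prop :=
  ∃ (W : κ × Bool → ℝ) (a b : ℝ), ∀ y : κ → ℝ, (∀ k, 0 ≤ y k ∧ y k ≤ R) →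
    g y = a * (∑ p : κ × Bool, |W p - y p.1|) + b

section Neuron

variable {κ : Type} [Fintype κ]

lemma isNeuron_of_isElem {R : ℝ} (φ : κ → ℝ → ℝ) (hφ : ∀ k, IsElem R (φ k)) (a b : ℝ) :
    IsNeuron R (fun y : κ → ℝ => a * (∑ k, φ k (y k)) + b) := by
  choose w₁ w₂ e h using hφ
  refine ⟨fun p => if p.2 then w₁ p.1 else w₂ p.1, a, b + a * ∑ k, e k, fun y hy => ?_⟩
  have : ∑ k, φ k (y k) = ∑ k, (|w₁ k - y k| + |w₂ k - y k|) + ∑ k, e k := by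
    rw [← Finset.sum_add_distrib]
    exact Finset.sum_congr rfl fun k _ => h k _ (hy k).1 (hy k).2
  simp only [Fintype.sum_prod_type, Fintype.sum_bool, if_true, this]
  simp
  ring

lemma isNeuron_const (R c : ℝ) : IsNeuron R (fun _ : κ → ℝ => c) :=
  ⟨0, 0, c, fun _ _ => by simp⟩

lemma isNeuron_coord [DecidableEq κ] (R : ℝ) (k : κ) : IsNeuron R (fun y : κ → ℝ => y k) := by
  have := isNeuron_of_isElem (R := R) (fun (i : κ) t => if i = k then 2 * t else 0)
    (fun i => by
      by_cases h : i = k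
      · simpa [h] using isElem_two_mul R
      · simpa [h] using isElem_zero R) (1 / 2) 0
  convert this using 2 with y
  simp

/-- Affine rescalings of a difference of two registers are neurons. -/
lemma isNeuron_sub [DecidableEq κ] (R c b : ℝ) {k l : κ} (hkl : k ≠ l) :
    IsNeuron R (fun y : κ → ℝ => c * (y k - y l) + b) := by
  have := isNeuron_of_isElem (R := R)
    (fun (i : κ) t => (if i = k then 2 * t else 0) + (if i = l then -(2 * t) else 0))
    (fun i => by
      by_cases h : i = k
      · subst h
        simpa [hkl] using isElem_two_mul R
      · by_cases h' : i = l
        · subst h'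
          simpa [h] using isElem_neg_two_mul R
        · simpa [h, h'] using isElem_zero R) (c / 2) b
  convert this using 2 with y
  simp only [Finset.sum_add_distrib, Finset.sum_ite_eq', Finset.mem_univ, if_true]
  ring

end Neuron

/-! ### Continuity of AdderNets -/

lemma IsAdderLayer.continuous {p q : ℕ} {L : (Fin p → ℝ) → Fin q → ℝ} (h : IsAdderLayer L) :
    Continuous L := by
  obtain ⟨W, a, b, h⟩ := h
  have : L = fun x i => a i * (∑ j, |W i j - x j|) + b i := by
    ext x i; exact h x i
  rw [this]
  fun_prop

lemma IsDeepAdderNet.continuous {d w q : ℕ} {A : (Fin d → ℝ) → Fin q → ℝ}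
    (h : IsDeepAdderNet d w A) : Continuous A := by
  induction h with
  | single L hL => exact hL.continuous
  | comp A L _ _ hL ih =>
    refine hL.continuous.comp ?_
    fun_prop

/-! ### Register machines computed by AdderNets -/

/-- The registers: `inl j` for the `j`-th input coordinate, `inr true` for the running minimum and
`inr false` for the scratch value. -/
abbrev Reg (d : ℕ) : Type := Fin d ⊕ Bool

/-- Some AdderNet of the permitted width, followed by a ReLU, has on `K` as output two copies of
each of the register values `y x`. -/
def IsState {d : ℕ} (K : Set (Fin d → ℝ)) (y : (Fin d → ℝ) → Reg d → ℝ) : Prop :=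
  ∃ A : (Fin d → ℝ) → Fin (Fintype.card (Reg d × Bool)) → ℝ,
    IsDeepAdderNet d (2 * (d + 5)) A ∧
    ∀ x ∈ K, ∀ p : Reg d × Bool, max (A x (Fintype.equivFin _ p)) 0 = y x p.1

section State

variable {d : ℕ} {K : Set (Fin d → ℝ)}

lemma card_reg_le (d : ℕ) : Fintype.card (Reg d × Bool) ≤ 2 * (d + 5) := by
  simp; omega

lemma IsState.nonneg {y : (Fin d → ℝ) → Reg d → ℝ} (h : IsState K y) {x : Fin d → ℝ} (hx : x ∈ K)
    (k : Reg d) : 0 ≤ y x k := by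
  obtain ⟨A, -, h⟩ := h
  rw [← h x hx (k, true)]
  exact le_max_right _ _

lemma IsState.bounded (hK : IsCompact K) {y : (Fin d → ℝ) → Reg d → ℝ} (h : IsState K y) :
    ∃ R : ℝ, ∀ x ∈ K, ∀ k, 0 ≤ y x k ∧ y x k ≤ R := by
  have h' := h
  obtain ⟨A, hA, hAy⟩ := h
  obtain ⟨C, hC⟩ := hK.exists_bound_of_continuousOn hA.continuous.continuousOn
  refine ⟨C, fun x hx k => ⟨h'.nonneg hx k, ?_⟩⟩
  rw [← hAy x hx (k, true)]
  have h1 := norm_le_pi_norm (A x) (Fintype.equivFin _ (k, true))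
  have h2 := hC x hx
  rw [Real.norm_eq_abs] at h1
  exact max_le ((le_abs_self _).trans (h1.trans h2)) ((norm_nonneg _).trans h2)

/-- A sum over neurons is a sum over the copies of the registers they hold. -/
lemma sum_neurons {y : (Fin d → ℝ) → Reg d → ℝ}
    {A : (Fin d → ℝ) → Fin (Fintype.card (Reg d × Bool)) → ℝ}
    {x : Fin d → ℝ} (hA : ∀ p : Reg d × Bool, max (A x (Fintype.equivFin _ p)) 0 = y x p.1)
    (W : Reg d × Bool → ℝ) :
    ∑ j, |W ((Fintype.equivFin _).symm j) - max (A x j) 0| = ∑ p, |W p - y x p.1| := by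
  rw [← (Fintype.equivFin (Reg d × Bool)).sum_comp]
  exact Finset.sum_congr rfl fun p _ => by rw [hA p, Equiv.symm_apply_apply]

/-- One more layer updates all registers simultaneously. -/
lemma IsState.step (hK : IsCompact K) {y : (Fin d → ℝ) → Reg d → ℝ} (h : IsState K y)
    (g : Reg d → (Reg d → ℝ) → ℝ) (hg : ∀ k R, IsNeuron R (g k)) :
    IsState K (fun x k => max (g k (y x)) 0) := by
  obtain ⟨R, hR⟩ := h.bounded hK
  obtain ⟨A, hA, hAy⟩ := h
  choose W a b hW using fun k => hg k R
  let e := Fintype.equivFin (Reg d × Bool)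
  let L : (Fin (Fintype.card (Reg d × Bool)) → ℝ) → Fin (Fintype.card (Reg d × Bool)) → ℝ :=
    fun z i => a (e.symm i).1 * (∑ j, |W (e.symm i).1 (e.symm j) - z j|) + b (e.symm i).1
  refine ⟨_, .comp A L hA (card_reg_le d) ⟨_, _, _, fun z i => rfl⟩, fun x hx p => ?_⟩
  simp only [L, e, Equiv.symm_apply_apply, sum_neurons (hAy x hx) (W p.1)]
  rw [hW p.1 _ (hR x hx)]

/-- A final layer reads off a single neuron, without ReLU. -/
lemma IsState.output (hK : IsCompact K) {y : (Fin d → ℝ) → Reg d → ℝ} (h : IsState K y)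
    (g : (Reg d → ℝ) → ℝ) (hg : ∀ R, IsNeuron R g) :
    ∃ A : (Fin d → ℝ) → Fin 1 → ℝ, IsDeepAdderNet d (2 * (d + 5)) A ∧
      ∀ x ∈ K, A x 0 = g (y x) := by
  obtain ⟨R, hR⟩ := h.bounded hK
  obtain ⟨A, hA, hAy⟩ := h
  obtain ⟨W, a, b, hW⟩ := hg R
  let L : (Fin (Fintype.card (Reg d × Bool)) → ℝ) → Fin 1 → ℝ :=
    fun z _ => a * (∑ j, |W ((Fintype.equivFin _).symm j) - z j|) + b
  refine ⟨_, .comp A L hA (card_reg_le d) ⟨_, _, _, fun z i => rfl⟩, fun x hx => ?_⟩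
  simp only [L, sum_neurons (hAy x hx) W]
  rw [hW _ (hR x hx)]

/-- Register contents: the input shifted by `R`, the minimum `m` and the scratch value `u`. -/
def regs (R : ℝ) (x : Fin d → ℝ) (m u : ℝ) : Reg d → ℝ :=
  Sum.elim (fun j => x j + R) (fun b => cond b m u)

/-- Two layers load the input and a constant. A single layer cannot isolate a coordinate, because
only one copy of each input is available; it computes `S = ∑ j, (x j + R)` and the sums `S - 2 x j`
instead, and the next layer takes differences. -/
lemma exists_state_init (hK : IsCompact K) {R : ℝ} (hR : ∀ x ∈ K, ∀ j, |x j| ≤ R)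
    {M₀ : ℝ} (hM₀ : 0 ≤ M₀) : IsState K (fun x => regs R x M₀ 0) := by
  let S : (Fin d → ℝ) → ℝ := fun x => ∑ j, (x j + R)
  have h1 : IsState K (fun x : Fin d → ℝ => Sum.elim (fun j => S x - 2 * x j)
      (fun b => cond b (S x) 0)) := by
    let e := Fintype.equivFin (Reg d × Bool)
    let W : Reg d → Fin d → ℝ := Sum.elim (fun i j => if j = i then R else -R) (fun _ _ => -R)
    let a : Reg d → ℝ := Sum.elim (fun _ => 1) (fun b => cond b 1 0)
    refine ⟨fun x i => a (e.symm i).1 * (∑ j, |W (e.symm i).1 j - x j|) + 0,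
      .single _ ⟨fun i => W (e.symm i).1, fun i => a (e.symm i).1, fun _ => 0, fun x i => rfl⟩, ?_⟩
    rintro x hx ⟨k, c⟩
    have hx' : ∀ j, -R ≤ x j ∧ x j ≤ R := fun j => abs_le.1 (hR x hx j)
    simp only [e, Equiv.symm_apply_apply]
    rcases k with i | b
    · have h0 : ∑ j, |W (Sum.inl i) j - x j| = S x - 2 * x i := by
        have : ∀ j, |W (Sum.inl i) j - x j| = (x j + R) - if j = i then 2 * x j else 0 := by
          intro j
          by_cases h : j = i
          · simp only [W, Sum.elim_inl, h, if_true]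
            rw [abs_of_nonneg (by linarith [hx' i])]; ring
          · simp only [W, Sum.elim_inl, h, if_false]
            rw [abs_of_nonpos (by linarith [hx' j])]; ring
        simp [this, Finset.sum_sub_distrib, S]
      simp only [a, Sum.elim_inl, one_mul, add_zero, h0]
      rw [← h0]
      exact max_eq_left (Finset.sum_nonneg fun _ _ => abs_nonneg _)
    · have h0 : ∑ j, |W (Sum.inr b) j - x j| = S x := by
        refine Finset.sum_congr rfl fun j _ => ?_
        simp only [W, Sum.elim_inr]
        rw [abs_of_nonpos (by linarith [hx' j])]; ring
      cases b
      · simp [a]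
      · simp only [a, Sum.elim_inr, cond_true, one_mul, add_zero, h0]
        rw [← h0]
        exact max_eq_left (Finset.sum_nonneg fun _ _ => abs_nonneg _)
  have h2 := h1.step hK (Sum.elim (fun j y => 1 / 2 * (y (Sum.inr true) - y (Sum.inl j)) + R)
    (fun b _ => cond b M₀ 0)) (by
      rintro (j | b) R'
      · exact isNeuron_sub _ _ _ (by simp)
      · exact isNeuron_const _ _)
  obtain ⟨A, hA, hAy⟩ := h2
  refine ⟨A, hA, fun x hx p => ?_⟩
  rw [hAy x hx p]
  rcases p with ⟨j | b, c⟩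
  · have := abs_le.1 (hR x hx j)
    simp only [Sum.elim_inl, Sum.elim_inr, cond_true, regs]
    rw [max_eq_left (by linarith)]; ring
  · cases b <;> simp [regs, hM₀]

/-- Two layers replace the running minimum `m` by `min m (c + ‖p - x‖₁)`. -/
lemma IsState.min_step (hK : IsCompact K) {R : ℝ} (hR : ∀ x ∈ K, ∀ j, |x j| ≤ R)
    {m : (Fin d → ℝ) → ℝ} (h : IsState K (fun x => regs R x (m x) 0))
    (p : Fin d → ℝ) {c : ℝ} (hc : 0 ≤ c) :
    IsState K (fun x => regs R x (min (m x) (c + ∑ j, |p j - x j|)) 0) := by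
  have hm : ∀ x ∈ K, 0 ≤ m x := fun x hx => h.nonneg hx (Sum.inr true)
  have h1 := h.step hK (Sum.elim (fun j y => y (Sum.inl j)) (fun b y => cond b (y (Sum.inr true))
      (y (Sum.inr true) - ∑ j, |(p j + R) - y (Sum.inl j)| - c))) (by
    rintro (j | _ | _) R'
    · exact isNeuron_coord _ _
    · have := isNeuron_of_isElem (R := R') (κ := Reg d)
        (Sum.elim (fun j t => 2 * |(p j + R) - t|) (fun b t => cond b (-(2 * t)) 0))
        (by
          rintro (j | _ | _)
          · exact isElem_abs _ _
          · exact isElem_zero _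
          · exact isElem_neg_two_mul _) (-1 / 2) (-c)
      convert this using 2 with y
      simp [Fintype.sum_sum_type, ← Finset.mul_sum]
      ring
    · exact isNeuron_coord _ _)
  have h2 := h1.step hK (Sum.elim (fun j y => y (Sum.inl j))
      (fun b y => cond b (1 * (y (Sum.inr true) - y (Sum.inr false)) + 0) 0)) (by
    rintro (j | _ | _) R'
    · exact isNeuron_coord _ _
    · exact isNeuron_const _ _
    · exact isNeuron_sub _ _ _ (by simp))
  obtain ⟨A, hA, hAy⟩ := h2
  refine ⟨A, hA, fun x hx q => ?_⟩
  rw [hAy x hx q]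
  rcases q with ⟨j | _ | _, b⟩
  · have := abs_le.1 (hR x hx j)
    have h0 : 0 ≤ x j + R := by linarith
    simp [regs, h0]
  · simp [regs]
  · have hs : 0 ≤ ∑ j, |p j - x j| := Finset.sum_nonneg fun _ _ => abs_nonneg _
    have hmx := hm x hx
    simp only [regs, Sum.elim_inl, Sum.elim_inr, cond_true, cond_false, add_sub_add_right_eq_sub,
      max_eq_left hmx]
    rcases le_total (m x) (c + ∑ j, |p j - x j|) with h' | h'
    · rw [min_eq_left h', max_eq_right (a := m x - _ - _) (by linarith),
        max_eq_left (by linarith)]; ring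
    · rw [min_eq_right h', max_eq_left (a := m x - _ - _) (by linarith),
        max_eq_left (by linarith)]; ring

/-- The minimum of `M₀` and of the functions `c p + ‖p - x‖₁`, `p ∈ t`, can be computed. -/
lemma exists_state_min (hK : IsCompact K) {R : ℝ} (hR : ∀ x ∈ K, ∀ j, |x j| ≤ R)
    {M₀ : ℝ} (hM₀ : 0 ≤ M₀) (c : (Fin d → ℝ) → ℝ) (hc : ∀ p, 0 ≤ c p)
    (t : Finset (Fin d → ℝ)) :
    ∃ m : (Fin d → ℝ) → ℝ, IsState K (fun x => regs R x (m x) 0) ∧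
      ∀ x v, v ≤ m x ↔ v ≤ M₀ ∧ ∀ p ∈ t, v ≤ c p + ∑ j, |p j - x j| := by
  classical
  induction t using Finset.induction_on with
  | empty => exact ⟨fun _ => M₀, exists_state_init hK hR hM₀, by simp⟩
  | insert p t _ ih =>
    obtain ⟨m, hm, hm'⟩ := ih
    refine ⟨_, hm.min_step hK hR p (hc p), fun x v => ?_⟩
    rw [le_min_iff, hm', Finset.forall_mem_insert]
    tauto

end State

/-! ### Approximation -/

/-- Uniform approximation on `K` of bounded, uniformly continuous functions. -/
lemma exists_uniform_approx {d : ℕ} {K : Set (Fin d → ℝ)} (hK : IsCompact K)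
    {g : (Fin d → ℝ) → ℝ} (hg : UniformContinuous g) {M : ℝ} (hM : ∀ x, |g x| ≤ M)
    {η : ℝ} (hη : 0 < η) :
    ∃ A : (Fin d → ℝ) → Fin 1 → ℝ, IsDeepAdderNet d (2 * (d + 5)) A ∧
      ∀ x ∈ K, |g x - A x 0| ≤ 3 * η := by
  have hM0 : 0 ≤ M := (abs_nonneg _).trans (hM 0)
  obtain ⟨R, hR⟩ : ∃ R : ℝ, ∀ x ∈ K, ∀ j, |x j| ≤ R := by
    obtain ⟨R, hR⟩ := hK.isBounded.exists_norm_le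
    exact ⟨R, fun x hx j => (norm_le_pi_norm x j).trans (hR x hx)⟩
  obtain ⟨δ, hδ, hgδ⟩ := Metric.uniformContinuous_iff.1 hg η hη
  -- Beyond distance `δ` this slope exceeds the oscillation `2 * M`; `+ 1` keeps it positive.
  let L : ℝ := 2 * M / δ + 1
  have hL : 0 < L := by positivity
  have hdist : ∀ x y : Fin d → ℝ, dist x y ≤ ∑ j, |x j - y j| := fun x y => by
    refine (dist_pi_le_iff (Finset.sum_nonneg fun _ _ => abs_nonneg _)).2 fun j => ?_
    exact Finset.single_le_sum (f := fun j => |x j - y j|) (fun _ _ => abs_nonneg _)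
      (Finset.mem_univ j)
  have hgL : ∀ x y : Fin d → ℝ, |g x - g y| ≤ η + L * ∑ j, |x j - y j| := by
    intro x y
    have hs : 0 ≤ ∑ j, |x j - y j| := Finset.sum_nonneg fun _ _ => abs_nonneg _
    rcases lt_or_ge (dist x y) δ with h | h
    · have := hgδ h
      rw [Real.dist_eq] at this
      have : 0 ≤ L * ∑ j, |x j - y j| := by positivity
      linarith
    · have h1 : L * δ ≤ L * ∑ j, |x j - y j| := by
        gcongr; exact h.trans (hdist x y)
      have h2 : L * δ = 2 * M + δ := by simp only [L]; field_simp
      have h3 := abs_sub (g x) (g y)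
      linarith [hM x, hM y]
  -- `r` is such that points at sup-distance `< r` satisfy `L * ‖x - p‖₁ ≤ η`.
  let r : ℝ := η / (L * (d + 1))
  have hr : 0 < r := by positivity
  have hLr : L * (d * r) ≤ η := by
    have : L * ((d + 1) * r) = η := by simp only [r]; field_simp
    nlinarith [mul_pos hL hr]
  obtain ⟨s, -, hsf, hs⟩ := hK.finite_cover_balls hr
  -- The registers hold `(g + M) / L`, so that the terms `‖p - x‖₁` enter with slope one.
  obtain ⟨m, hm, hm'⟩ := exists_state_min hK hR (M₀ := 2 * M / L) (by positivity)
    (fun p => (g p + M) / L) (fun p => div_nonneg (by linarith [(abs_le.1 (hM p)).1]) hL.le)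
    hsf.toFinset
  obtain ⟨A, hA, hAm⟩ := hm.output hK
    (fun y => L * (y (Sum.inr true) - y (Sum.inr false)) + -M)
    (fun R' => isNeuron_sub R' L (-M) (by simp))
  refine ⟨A, hA, fun x hx => ?_⟩
  have hAx : A x 0 = L * m x - M := by
    rw [hAm x hx]; simp only [regs, Sum.elim_inr, cond_true, cond_false]; ring
  rw [hAx, abs_le]
  constructor
  · obtain ⟨p, hp, hxp⟩ := Set.mem_iUnion₂.1 (hs hx)
    have h1 : m x ≤ (g p + M) / L + ∑ j, |p j - x j| :=
      ((hm' x (m x)).1 le_rfl).2 p (hsf.mem_toFinset.2 hp)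
    have h2 : ∑ j, |p j - x j| ≤ d * r := by
      have : ∑ j, |p j - x j| ≤ ∑ _j : Fin d, r := by
        refine Finset.sum_le_sum fun j _ => ?_
        rw [← Real.dist_eq]
        exact (dist_le_pi_dist p x j).trans (by rw [dist_comm]; exact (Metric.mem_ball.1 hxp).le)
      simpa using this
    have h3 : L * m x ≤ (g p + M) + L * ∑ j, |p j - x j| := by
      calc L * m x ≤ L * ((g p + M) / L + ∑ j, |p j - x j|) := by gcongr
        _ = _ := by field_simp
    have h4 : L * ∑ j, |p j - x j| ≤ η := (mul_le_mul_of_nonneg_left h2 hL.le).trans hLr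
    have h5 := (abs_le.1 (hgL p x)).2
    linarith
  · have h1 : (g x + M - η) / L ≤ m x := by
      refine (hm' x _).2 ⟨?_, fun p _ => ?_⟩
      · gcongr; linarith [(abs_le.1 (hM x)).2]
      · have h5 := (abs_le.1 (hgL p x)).1
        rw [div_add' _ _ _ hL.ne']
        gcongr
        linarith
    rw [div_le_iff₀ hL] at h1
    linarith

/-- Universal approximation of width-bounded AdderNets: deep AdderNets of width at most
`2(d + 5)` are dense in `L¹(K)` for every compact `K ⊆ ℝ^d`. -/
theorem addernet_width_bounded_universal_approximation
    (d : ℕ) (K : Set (Fin d → ℝ)) (hK : IsCompact K)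
    (f : (Fin d → ℝ) → ℝ) (hf : IntegrableOn f K volume) :
    ∀ ε > 0, ∃ A : (Fin d → ℝ) → Fin 1 → ℝ,
      IsDeepAdderNet d (2 * (d + 5)) A ∧
      (∫ x in K, |f x - A x 0|) ≤ ε := by
  intro ε hε
  obtain ⟨g, hgc, hfg, hg, hgi⟩ :=
    hf.integrable.exists_hasCompactSupport_integral_sub_le (half_pos hε)
  obtain ⟨M, hM⟩ := hgc.exists_bound_of_continuous hg
  let V : ℝ := volume.real K
  have hV : 0 ≤ V := measureReal_nonneg
  obtain ⟨A, hA, hgA⟩ := exists_uniform_approx hK (hgc.uniformContinuous_of_continuous hg)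
    hM (η := ε / (6 * (V + 1))) (by positivity)
  refine ⟨A, hA, ?_⟩
  have hAi : IntegrableOn (fun x => A x 0) K volume :=
    ((continuous_apply 0).comp hA.continuous).continuousOn.integrableOn_compact hK
  have h1 : (∫ x in K, |g x - A x 0|) ≤ ε / 2 := by
    calc (∫ x in K, |g x - A x 0|) ≤ ∫ _ in K, 3 * (ε / (6 * (V + 1))) :=
          setIntegral_mono_on (hgi.sub hAi).abs
            (integrableOn_const hK.measure_lt_top.ne) hK.measurableSet hgA
      _ = V * (3 * (ε / (6 * (V + 1)))) := by rw [setIntegral_const, smul_eq_mul]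
      _ = ε / 2 * (V / (V + 1)) := by field_simp; ring
      _ ≤ ε / 2 * 1 := by
          gcongr
          exact (div_le_one (by linarith)).2 (by linarith)
      _ = ε / 2 := mul_one _
  calc (∫ x in K, |f x - A x 0|) ≤ ∫ x in K, (‖f x - g x‖ + |g x - A x 0|) :=
        integral_mono (hf.integrable.sub hAi).abs
          ((hf.integrable.sub hgi).norm.add (hgi.sub hAi).abs)
          fun x => abs_sub_le (f x) (g x) (A x 0)
    _ = (∫ x in K, ‖f x - g x‖) + ∫ x in K, |g x - A x 0| :=
        integral_add (hf.integrable.sub hgi).norm (hgi.sub hAi).abs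
    _ ≤ ε := by linarith
end

section
/- Approximation bound for single-hidden-layer AdderNets: For every d ∈ ℕ there exists a constant C > 0 depending only on d such that the following holds. Let L₁ > 0 and let f: ℝ^d → ℝ satisfy |f(x) − f(x')| ≤ L₁ ‖x − x'‖₁ for all x, x' ∈ ℝ^d, with ‖f‖₁ := ∫_{ℝ^d} |f(x)| dx < ∞ (Lebesgue integral). Let μ be a probability measure on ℝ^d and set ‖f‖_μ := ∫ |f(x)| dμ(x). Then for every ε > 0 there exist N ∈ ℕ with N ≤ ‖f‖₁ ‖f‖_μ / min(ε^{d+2} L₁², ε^{d+1} L₁ ‖f‖_μ), scalars a₁,…,a_N, b₁,…,b_N ∈ ℝ and vectors W₁,…,W_N ∈ ℝ^d such that the function A(x) = Σ_{i=1}^N aᵢ · ReLU(‖Wᵢ − x‖₁ + bᵢ) satisfies ∫ ( f(x) − A(x) )² dμ(x) ≤ C ε² L₁². -/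
open MeasureTheory

/-!
The network is a quasi-interpolant of `f` on the lattice `η ℤ^d`, with `η` a constant multiple
of `ε`. It approximates `f` uniformly and deterministically, with width at most
`‖f‖₁ / (ε^(d+1) L₁)`, which is below the required bound as soon as `‖f‖_μ > 0`.

The main point is that there is a compactly supported piecewise linear profile `bump d`, a fixed
combination of finitely many ReLUs, whose ℓ¹-radial lattice translates
`y ↦ bump d ‖y - k‖₁`, `k ∈ ℤ^d`, form an exact (signed) partition of unity (`sum_bump`).
The profile is the finite difference of order `d + 1`, with step one in `r`, of `(r - ρ)₊`,
divided by `2^d`. To see that the translates sum to one, encode a function `∑ a_c (r - c)₊` of `r`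
as the element `∑ a_c X^c` of the monoid algebra `ℝ[ℝ]`. The sum over one lattice coordinate becomes
a geometric series, with `(1 - X) ∑ₙ X^|y - n| = X^t + X^(1 - t)` up to a tail, where `t` is the
fractional part of `y`. Hence `d` of the `d + 1` differences turn the lattice sum into `2^d` terms
`(r - c)₊` with `0 ≤ c ≤ d`, and the last difference makes each of them equal to one for
`r = d + 1`.

Only lattice points with `|f(ηk)| ≥ (d + 1) η L₁` are kept. On the cube of side `η` at such a point
`|f| ≥ η L₁`, so their number is at most `‖f‖₁ / (η^(d+1) L₁)` (`card_mul_le`); the others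
contribute `O(η L₁)` to the uniform error (`abs_sub_interp_le`).

If `‖f‖_μ = 0`, the quotient bounding the width is `x / 0 = 0` and `f` vanishes `μ`-almost
everywhere, so the empty network works.
-/

namespace AdderNet

/-! ### The exponent algebra and its evaluation on ReLUs -/

/-- The monomial `X^c` of the monoid algebra `ℝ[ℝ]`, with a real exponent `c`. It stands for the
function `r ↦ (r - c)₊`, multiplication by `X^a` being the translation by `a`. -/
noncomputable def X (c : ℝ) : AddMonoidAlgebra ℝ ℝ := AddMonoidAlgebra.single c 1

lemma X_add (a b : ℝ) : X (a + b) = X a * X b := by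
  simp [X, AddMonoidAlgebra.single_mul_single]

lemma X_zero : X 0 = 1 := rfl

lemma X_sum {ι : Type*} (s : Finset ι) (c : ι → ℝ) : X (∑ i ∈ s, c i) = ∏ i ∈ s, X (c i) := by
  classical
  induction s using Finset.induction_on with
  | empty => simp [X_zero]
  | insert a s ha ih => rw [Finset.sum_insert ha, Finset.prod_insert ha, X_add, ih]

lemma X_pow (c : ℝ) (n : ℕ) : X c ^ n = X (n * c) := by
  induction n with
  | zero => simp [X_zero]
  | succ n ih => rw [pow_succ, ih, ← X_add]; congr 1; push_cast; ring

/-- The linear functional on `ℝ[ℝ]` with `X^c ↦ (r - c)₊`. -/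
noncomputable def ev (r : ℝ) : AddMonoidAlgebra ℝ ℝ →ₗ[ℝ] ℝ :=
  (Finsupp.linearCombination ℝ (fun c : ℝ => max (r - c) 0)) ∘ₗ
    (AddMonoidAlgebra.coeffLinearEquiv ℝ).toLinearMap

lemma ev_X (r c : ℝ) : ev r (X c) = max (r - c) 0 := by
  simp [ev, X]

lemma one_sub_X_pow (c : ℝ) (n : ℕ) :
    (1 - X c) ^ n = ∑ i ∈ Finset.range (n + 1), ((-1 : ℝ) ^ i * (n.choose i : ℝ)) • X (i * c) := by
  rw [sub_eq_neg_add, add_pow]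
  refine Finset.sum_congr rfl fun i _ => ?_
  rw [neg_pow, X_pow, one_pow, mul_one, Algebra.smul_def, map_mul, map_pow, map_neg, map_one,
    map_natCast]
  ring

/-- The integer interval `(a - R, a + R]` paired off around its centre `a + 1/2`. -/
lemma sum_Ioc_int {M : Type*} [AddCommMonoid M] (f : ℤ → M) (a : ℤ) (R : ℕ) :
    ∑ k ∈ Finset.Ioc (a - R) (a + R), f k
      = ∑ n ∈ Finset.range R, (f (a - n) + f (a + 1 + n)) := by
  induction R with
  | zero => simp
  | succ R ih =>
    have h : Finset.Ioc (a - (R + 1 : ℕ)) (a + (R + 1 : ℕ))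
        = insert (a - R) (insert (a + 1 + R) (Finset.Ioc (a - R) (a + R))) := by
      ext k; simp only [Finset.mem_Ioc, Finset.mem_insert]; push_cast; omega
    rw [h, Finset.sum_insert, Finset.sum_insert, ih, Finset.sum_range_succ]
    · rw [add_comm, ← add_assoc, add_assoc, add_comm (f (a + 1 + R))]
    · simp only [Finset.mem_Ioc]; omega
    · simp only [Finset.mem_Ioc, Finset.mem_insert]; omega

/-- The lattice sum in one coordinate is a geometric series, because the distances from `y` to the
integers are `t + n` and `1 - t + n` with `t` the fractional part of `y`. -/
lemma one_sub_X_mul_sum (y : ℝ) (R : ℕ) :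
    (1 - X 1) * ∑ k ∈ Finset.Ioc (⌊y⌋ - (R : ℤ)) (⌊y⌋ + R), X |y - k|
      = (X (Int.fract y) + X (1 - Int.fract y)) * (1 - X R) := by
  have h : ∀ n ∈ Finset.range R, X |y - ((⌊y⌋ - n : ℤ) : ℝ)| + X |y - ((⌊y⌋ + 1 + n : ℤ) : ℝ)|
      = (X (Int.fract y) + X (1 - Int.fract y)) * X 1 ^ n := by
    intro n _
    have h0 := Int.fract_nonneg y
    have h1 := (Int.fract_lt_one y).le
    have hf : Int.fract y = y - ⌊y⌋ := rfl
    rw [X_pow, add_mul, ← X_add, ← X_add]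
    congr 2
    · push_cast
      rw [abs_of_nonneg] <;> linarith [(Nat.cast_nonneg n : (0:ℝ) ≤ n)]
    · push_cast
      rw [abs_of_nonpos] <;> linarith [(Nat.cast_nonneg n : (0:ℝ) ≤ n)]
  rw [sum_Ioc_int, Finset.sum_congr rfl h, ← Finset.mul_sum, mul_left_comm, mul_neg_geom_sum, X_pow,
    mul_one]

/-! ### The partition of unity -/

/-- The lattice points `k` with `⌊y j⌋ - (d + 1) < k j ≤ ⌊y j⌋ + (d + 1)` for every `j`. Translates
of the bump at the other lattice points vanish at `y`. -/
noncomputable def box {d : ℕ} (y : Fin d → ℝ) : Finset (Fin d → ℤ) :=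
  Fintype.piFinset fun j => Finset.Ioc (⌊y j⌋ - ((d + 1 : ℕ) : ℤ)) (⌊y j⌋ + ((d + 1 : ℕ) : ℤ))

/-- The signed binomial coefficients of the difference of order `d + 1`, divided by `2^d`. -/
noncomputable def coef (d i : ℕ) : ℝ := (-1) ^ i * ((d + 1).choose i : ℝ) / 2 ^ d

/-- The radial profile: the normalised difference of order `d + 1` of `r ↦ (r - ρ)₊`
at `r = d + 1`. -/
noncomputable def bump (d : ℕ) (ρ : ℝ) : ℝ :=
  ∑ i ∈ Finset.range (d + 2), coef d i * max ((d + 1 - i : ℝ) - ρ) 0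

/-- The factor `(1 - X^(d+1))^d` is the truncation tail; only its constant term survives `ev`. -/
lemma prod_reflect {d : ℕ} (y : Fin d → ℝ) :
    ev (d + 1) ((1 - X 1) * (∏ j, (X (Int.fract (y j)) + X (1 - Int.fract (y j))))
      * (1 - X ((d + 1 : ℕ) : ℝ)) ^ d) = 2 ^ d := by
  -- the distance from `y j` to the integer on its left or on its right
  set c : Fin d → Bool → ℝ := fun j b => bif b then Int.fract (y j) else 1 - Int.fract (y j)
  have hc0 : ∀ j b, 0 ≤ c j b := by
    intro j b
    cases b
    · simpa [c] using (Int.fract_lt_one (y j)).le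
    · simp [c]
  have hc1 : ∀ j b, c j b ≤ 1 := by
    intro j b
    cases b
    · simp [c]
    · simpa [c] using (Int.fract_lt_one (y j)).le
  have hA : ∏ j, (X (Int.fract (y j)) + X (1 - Int.fract (y j)))
      = ∑ p : Fin d → Bool, X (∑ j, c j (p j)) := by
    have : ∀ j, X (Int.fract (y j)) + X (1 - Int.fract (y j)) = ∑ b : Bool, X (c j b) := by
      intro j; simp [c]
    simp_rw [this, X_sum]
    rw [Finset.prod_univ_sum, Fintype.piFinset_univ]
  have key : ∀ p : Fin d → Bool,
      ev (d + 1) ((1 - X 1) * X (∑ j, c j (p j)) * (1 - X ((d + 1 : ℕ) : ℝ)) ^ d) = 1 := by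
    intro p
    have s0 : 0 ≤ ∑ j, c j (p j) := Finset.sum_nonneg fun j _ => hc0 _ _
    have s1 : ∑ j, c j (p j) ≤ d := by
      refine (Finset.sum_le_sum fun j _ => hc1 j (p j)).trans ?_
      simp
    rw [one_sub_X_pow, Finset.mul_sum, map_sum, Finset.sum_eq_single 0]
    · simp only [pow_zero, Nat.choose_zero_right, Nat.cast_one, one_mul, one_smul, CharP.cast_eq_zero,
        zero_mul, X_zero, mul_one, sub_mul, ← X_add, map_sub, ev_X]
      rw [max_eq_left (by linarith), max_eq_left (by linarith)]
      ring
    · intro i _ hi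
      have h1 : (1 : ℝ) ≤ i := by exact_mod_cast Nat.one_le_iff_ne_zero.2 hi
      have h2 : (d + 1 : ℝ) ≤ i * ((d + 1 : ℕ) : ℝ) := by
        push_cast; nlinarith [(Nat.cast_nonneg d : (0:ℝ) ≤ d)]
      simp only [mul_smul_comm, map_smul, sub_mul, one_mul, ← X_add, map_sub, ev_X]
      rw [max_eq_right (by linarith), max_eq_right (by linarith)]
      simp
    · simp
  rw [hA, Finset.mul_sum, Finset.sum_mul, map_sum, Finset.sum_congr rfl fun p _ => key p]
  simp

/-- The ℓ¹-radial lattice translates of the bump sum to one. -/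
lemma sum_bump {d : ℕ} (y : Fin d → ℝ) :
    ∑ k ∈ box y, bump d (∑ j, |y j - k j|) = 1 := by
  have h1 : (1 - X 1) ^ (d + 1) * ∏ j, (∑ k ∈ Finset.Ioc (⌊y j⌋ - ((d + 1 : ℕ) : ℤ))
      (⌊y j⌋ + ((d + 1 : ℕ) : ℤ)), X |y j - k|)
      = (1 - X 1) * (∏ j, (X (Int.fract (y j)) + X (1 - Int.fract (y j))))
      * (1 - X ((d + 1 : ℕ) : ℝ)) ^ d := by
    have h2 : ∀ n : ℕ, ∀ z : AddMonoidAlgebra ℝ ℝ, z ^ n = ∏ _j : Fin n, z := by simp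
    rw [pow_succ', mul_assoc, mul_assoc, h2 d (1 - X 1), h2 d (1 - X _), ← Finset.prod_mul_distrib,
      ← Finset.prod_mul_distrib]
    congr 1
    exact Finset.prod_congr rfl fun j _ => one_sub_X_mul_sum (y j) (d + 1)
  have h3 := prod_reflect y
  rw [← h1, Finset.prod_univ_sum, one_sub_X_pow, Finset.sum_mul_sum, Finset.sum_comm, map_sum] at h3
  have h4 : ∀ k : Fin d → ℤ, ev (d + 1) (∑ i ∈ Finset.range (d + 1 + 1),
      ((-1 : ℝ) ^ i * ((d + 1).choose i : ℝ)) • X (i * 1) * ∏ j, X |y j - k j|)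
      = 2 ^ d * bump d (∑ j, |y j - k j|) := by
    intro k
    rw [map_sum, bump, Finset.mul_sum]
    refine Finset.sum_congr rfl fun i _ => ?_
    rw [← X_sum, smul_mul_assoc, map_smul, ← X_add, ev_X, coef, smul_eq_mul, mul_one, sub_sub]
    field_simp
  rw [Finset.sum_congr rfl fun k _ => h4 k, ← Finset.mul_sum] at h3
  exact mul_left_cancel₀ (by positivity) (h3.trans (mul_one _).symm)

lemma bump_eq_zero {d : ℕ} {ρ : ℝ} (h : (d + 1 : ℝ) ≤ ρ) : bump d ρ = 0 := by
  refine Finset.sum_eq_zero fun i _ => ?_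
  rw [max_eq_right, mul_zero]
  linarith [(Nat.cast_nonneg i : (0:ℝ) ≤ i)]

/-- A bound for `|bump d|` on `[0, ∞)`. -/
noncomputable def bumpBound (d : ℕ) : ℝ := ∑ i ∈ Finset.range (d + 2), |coef d i| * (d + 1)

lemma bumpBound_nonneg (d : ℕ) : 0 ≤ bumpBound d :=
  Finset.sum_nonneg fun _ _ => by positivity

lemma abs_bump_le {d : ℕ} {ρ : ℝ} (h : 0 ≤ ρ) : |bump d ρ| ≤ bumpBound d := by
  refine (Finset.abs_sum_le_sum_abs _ _).trans (Finset.sum_le_sum fun i _ => ?_)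
  rw [abs_mul]
  refine mul_le_mul_of_nonneg_left ?_ (abs_nonneg _)
  rw [abs_of_nonneg (le_max_right _ _)]
  exact max_le (by linarith [(Nat.cast_nonneg i : (0:ℝ) ≤ i)]) (by positivity)

lemma abs_sub_le_of_mem_box {d : ℕ} {y : Fin d → ℝ} {k : Fin d → ℤ} (hk : k ∈ box y) (j : Fin d) :
    |y j - k j| ≤ d + 1 := by
  have h := Fintype.mem_piFinset.1 hk j
  rw [Finset.mem_Ioc] at h
  have h1 : (⌊y j⌋ : ℝ) - (d + 1) + 1 ≤ k j := by exact_mod_cast h.1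
  have h2 : (k j : ℝ) ≤ ⌊y j⌋ + (d + 1) := by exact_mod_cast h.2
  have h3 := Int.floor_le (y j)
  have h4 := (Int.lt_floor_add_one (y j)).le
  rw [abs_le]
  constructor <;> linarith

lemma bump_eq_zero_of_notMem_box {d : ℕ} {y : Fin d → ℝ} {k : Fin d → ℤ} (hk : k ∉ box y) :
    bump d (∑ j, |y j - k j|) = 0 := by
  apply bump_eq_zero
  rw [box, Fintype.mem_piFinset] at hk
  push Not at hk
  obtain ⟨j, hj⟩ := hk
  refine le_trans ?_ (Finset.single_le_sum (f := fun j => |y j - k j|)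
    (fun _ _ => abs_nonneg _) (Finset.mem_univ j))
  have h3 := Int.floor_le (y j)
  have h4 := (Int.lt_floor_add_one (y j)).le
  rw [Finset.mem_Ioc, not_and_or, not_lt, not_le] at hj
  rcases hj with h | h
  · have h1 : (k j : ℝ) ≤ ⌊y j⌋ - (d + 1) := by exact_mod_cast h
    exact le_trans (by linarith) (le_abs_self _)
  · have h1 : (⌊y j⌋ : ℝ) + (d + 1) + 1 ≤ k j := by exact_mod_cast h
    exact le_trans (by linarith) (neg_le_abs _)

lemma card_box {d : ℕ} (y : Fin d → ℝ) : (box y).card = (2 * (d + 1)) ^ d := by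
  rw [box, Fintype.card_piFinset]
  simp only [Int.card_Ioc]
  rw [Finset.prod_congr rfl (g := fun _ => 2 * (d + 1))]
  · simp
  · intro j _; omega

/-- On `[0, ∞)` the profile is a combination of terms `(ρ + β)₊`, since there
`(m - ρ)₊ = (ρ - m)₊ - (ρ)₊ + m ((ρ + 1)₊ - (ρ)₊)` for `m ≥ 0`. -/
lemma bump_eq_relu (d : ℕ) : ∃ α β : Fin (d + 2) × Fin 3 → ℝ, ∀ ρ : ℝ, 0 ≤ ρ →
    bump d ρ = ∑ t, α t * max (ρ + β t) 0 := by
  refine ⟨fun t => coef d t.1 * ![1, -(1 + (d + 1 - t.1 : ℝ)), (d + 1 - t.1 : ℝ)] t.2,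
    fun t => ![-(d + 1 - t.1 : ℝ), 0, 1] t.2, fun ρ hρ => ?_⟩
  rw [bump, Finset.sum_range, Fintype.sum_prod_type]
  refine Finset.sum_congr rfl fun i _ => ?_
  have hi : ((i : ℕ) : ℝ) ≤ d + 1 := by exact_mod_cast Nat.le_of_lt_succ i.2
  set m : ℝ := d + 1 - (i : ℕ) with hm
  have h : max (m - ρ) 0 = max (ρ + -m) 0 - ρ + m := by
    rcases le_total m ρ with h | h
    · rw [max_eq_right (by linarith), max_eq_left (by linarith)]; ring
    · rw [max_eq_left (by linarith), max_eq_right (by linarith)]; ring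
  simp only [Fin.sum_univ_three, Matrix.cons_val_zero, Matrix.cons_val_one, Matrix.cons_val]
  rw [h, max_eq_left (a := ρ + 0) (by linarith), max_eq_left (a := ρ + 1) (by linarith)]
  ring

/-! ### Lattice interpolation of a Lipschitz function -/

/-- The lattice points where `|f|` is large number at most `‖f‖₁ / (η^(d+1) L₁)`, as each of them
owns a cube of side `η` on which `|f| ≥ η L₁`. -/
lemma card_mul_le {d : ℕ} {L1 : ℝ} (hL : 0 < L1) {f : (Fin d → ℝ) → ℝ}
    (hf : ∀ x x' : Fin d → ℝ, |f x - f x'| ≤ L1 * ∑ j, |x j - x' j|)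
    (hfi : Integrable f volume) {η : ℝ} (hη : 0 < η) (T : Finset (Fin d → ℤ))
    (hT : ∀ k ∈ T, (d + 1) * η * L1 ≤ |f fun j => η * k j|) :
    (T.card : ℝ) * (η ^ (d + 1) * L1) ≤ ∫ x, |f x| := by
  set Q : (Fin d → ℤ) → Set (Fin d → ℝ) := fun k =>
    Set.pi Set.univ fun j => Set.Ico (η * k j) (η * k j + η) with hQ
  have hQm : ∀ k, MeasurableSet (Q k) := fun k =>
    MeasurableSet.univ_pi fun j => measurableSet_Ico
  have hvol : ∀ k, volume.real (Q k) = η ^ d := by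
    intro k
    have : (fun j => η * (k j : ℝ)) ≤ fun j => η * (k j : ℝ) + η := fun j => by simp [hη.le]
    rw [Measure.real, hQ, Real.volume_pi_Ico_toReal this]
    simp
  have hfin : ∀ k, volume (Q k) ≠ ⊤ := by
    intro k
    simp only [hQ, Real.volume_pi_Ico]
    exact (ENNReal.prod_lt_top fun _ _ => ENNReal.ofReal_lt_top).ne
  have hdisj : ∀ k k', k ≠ k' → Disjoint (Q k) (Q k') := by
    intro k k' hne
    rw [Set.disjoint_left]
    intro x hx hx'
    apply hne
    funext j
    have h1 := hx j (Set.mem_univ j)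
    have h2 := hx' j (Set.mem_univ j)
    have e : ∀ m : ℤ, x j ∈ Set.Ico (η * m) (η * m + η) → ⌊x j / η⌋ = m := by
      intro m hm
      rw [Int.floor_eq_iff, le_div_iff₀ hη, div_lt_iff₀ hη]
      constructor <;> nlinarith [hm.1, hm.2]
    exact (e _ h1).symm.trans (e _ h2)
  have hlow : ∀ k ∈ T, η ^ (d + 1) * L1 ≤ ∫ x in Q k, |f x| := by
    intro k hk
    have := setIntegral_ge_of_const_le_real (μ := volume) (f := fun x => |f x|) (c := η * L1)
      (hQm k) (hfin k) ?_ hfi.abs.integrableOn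
    · rw [hvol] at this
      refine le_trans (le_of_eq ?_) this
      ring
    · intro x hx
      have h1 := hf (fun j => η * k j) x
      have h2 : ∑ j, |η * (k j : ℝ) - x j| ≤ d * η := by
        refine (Finset.sum_le_sum (g := fun _ => η) fun j _ => ?_).trans (by simp)
        have := hx j (Set.mem_univ j)
        rw [abs_le]
        constructor <;> linarith [this.1, this.2]
      have h3 := mul_le_mul_of_nonneg_left h2 hL.le
      have h4 := hT k hk
      have h5 := abs_sub_abs_le_abs_sub (f fun j => η * k j) (f x)
      nlinarith
  calc (T.card : ℝ) * (η ^ (d + 1) * L1) = ∑ k ∈ T, η ^ (d + 1) * L1 := by simp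
    _ ≤ ∑ k ∈ T, ∫ x in Q k, |f x| := Finset.sum_le_sum hlow
    _ = ∫ x in ⋃ k ∈ T, Q k, |f x| := by
      rw [integral_biUnion_finset T (fun k _ => hQm k) (fun k _ k' _ h => hdisj k k' h)
        (fun k _ => hfi.abs.integrableOn)]
    _ ≤ ∫ x, |f x| := setIntegral_le_integral hfi.abs (ae_of_all _ fun x => abs_nonneg _)

/-- The constant in the uniform error of the lattice interpolant. -/
noncomputable def errConst (d : ℕ) : ℝ := (2 * (d + 1)) ^ d * ((d + 1) ^ 2 * bumpBound d)

/-- The interpolant over a finite set `S` of lattice points that includes all those where `|f|` is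
large is uniformly close to `f`: the partition of unity has boundedly many terms at `x`, all with
nodes within `O(η)` of `x`. -/
lemma abs_sub_interp_le {d : ℕ} {L1 : ℝ} (hL : 0 < L1) {f : (Fin d → ℝ) → ℝ}
    (hf : ∀ x x' : Fin d → ℝ, |f x - f x'| ≤ L1 * ∑ j, |x j - x' j|)
    {η : ℝ} (hη : 0 < η) (S : Finset (Fin d → ℤ))
    (hS : ∀ k ∉ S, |f fun j => η * k j| ≤ (d + 1) * η * L1) (x : Fin d → ℝ) :
    |f x - ∑ k ∈ S, (f fun j => η * k j) * bump d (∑ j, |x j / η - k j|)|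
      ≤ errConst d * η * L1 := by
  classical
  set y : Fin d → ℝ := fun j => x j / η with hy
  set g : (Fin d → ℤ) → ℝ := fun k => if k ∈ S then f fun j => η * k j else 0 with hg
  have e1 : ∑ k ∈ S, (f fun j => η * k j) * bump d (∑ j, |x j / η - k j|)
      = ∑ k ∈ box y, g k * bump d (∑ j, |y j - k j|) := by
    rw [Finset.sum_subset (Finset.subset_union_left (s₁ := box y) (s₂ := S)),
      ← Finset.sum_subset (Finset.subset_union_right (s₁ := box y) (s₂ := S))]
    · refine Finset.sum_congr rfl fun k hk => ?_
      simp [hg, hk, hy]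
    · intro k _ hk; simp [hg, hk]
    · intro k _ hk; rw [bump_eq_zero_of_notMem_box hk, mul_zero]
  have e2 : f x = ∑ k ∈ box y, f x * bump d (∑ j, |y j - k j|) := by
    rw [← Finset.mul_sum, sum_bump, mul_one]
  rw [e1]
  nth_rw 1 [e2]
  rw [← Finset.sum_sub_distrib]
  have hterm : ∀ k ∈ box y, |f x * bump d (∑ j, |y j - k j|) - g k * bump d (∑ j, |y j - k j|)|
      ≤ (d + 1) ^ 2 * η * L1 * bumpBound d := by
    intro k hk
    rw [← sub_mul, abs_mul]
    refine mul_le_mul ?_ (abs_bump_le (Finset.sum_nonneg fun _ _ => abs_nonneg _)) (abs_nonneg _)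
      (by positivity)
    have h1 := hf x fun j => η * k j
    have h2 : ∑ j, |x j - η * k j| ≤ d * (η * (d + 1)) := by
      refine (Finset.sum_le_sum (g := fun _ => η * (d + 1)) fun j _ => ?_).trans (by simp)
      have h3 := abs_sub_le_of_mem_box hk j
      have h4 : x j - η * k j = η * (y j - k j) := by rw [hy]; field_simp
      rw [h4, abs_mul, abs_of_pos hη]
      exact mul_le_mul_of_nonneg_left h3 hη.le
    have h3 : |(f fun j => η * k j) - g k| ≤ (d + 1) * η * L1 := by
      by_cases hk' : k ∈ S
      · simp only [hg, hk', if_true, sub_self, abs_zero]; positivity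
      · simpa [hg, hk'] using hS k hk'
    calc |f x - g k| ≤ |f x - f fun j => η * k j| + |(f fun j => η * k j) - g k| :=
          abs_sub_le _ _ _
      _ ≤ L1 * (d * (η * (d + 1))) + (d + 1) * η * L1 :=
          add_le_add (h1.trans (mul_le_mul_of_nonneg_left h2 hL.le)) h3
      _ = (d + 1) ^ 2 * η * L1 := by ring
  refine (Finset.abs_sum_le_sum_abs _ _).trans ((Finset.sum_le_sum hterm).trans (le_of_eq ?_))
  rw [Finset.sum_const, card_box, nsmul_eq_mul, errConst]
  push_cast
  ring

/-- Change of scale in a ReLU sum, by homogeneity of the ReLU and of the ℓ¹ norm. -/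
lemma sum_relu_scale {d : ℕ} {η : ℝ} (hη : 0 < η) {τ : Type*} [Fintype τ] (α β : τ → ℝ)
    (x w : Fin d → ℝ) :
    ∑ t, α t * max ((∑ j, |x j / η - w j|) + β t) 0
      = ∑ t, α t / η * max ((∑ j, |η * w j - x j|) + η * β t) 0 := by
  have h1 : ∑ j, |η * w j - x j| = η * ∑ j, |x j / η - w j| := by
    rw [Finset.mul_sum]
    refine Finset.sum_congr rfl fun j _ => ?_
    have h2 : x j - η * w j = η * (x j / η - w j) := by field_simp
    rw [abs_sub_comm, h2, abs_mul, abs_of_pos hη]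
  refine Finset.sum_congr rfl fun t _ => ?_
  have h3 : max ((∑ j, |η * w j - x j|) + η * β t) 0
      = η * max ((∑ j, |x j / η - w j|) + β t) 0 := by
    rw [h1, ← mul_add, mul_max_of_nonneg _ _ hη.le, mul_zero]
  rw [h3, ← mul_assoc, div_mul_cancel₀ _ hη.ne.symm]

/-- Uniform approximation of `f` by a network of width at most `‖f‖₁ / (ε^(d+1) L₁)`. -/
lemma exists_net (d : ℕ) : ∃ C : ℝ, ∀ (L1 : ℝ), 0 < L1 → ∀ f : (Fin d → ℝ) → ℝ,
    (∀ x x' : Fin d → ℝ, |f x - f x'| ≤ L1 * ∑ j, |x j - x' j|) → Integrable f volume →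
    ∀ ε : ℝ, 0 < ε → ∃ (N : ℕ) (a b : Fin N → ℝ) (W : Fin N → Fin d → ℝ),
      (N : ℝ) * (ε ^ (d + 1) * L1) ≤ ∫ x, |f x| ∧
      ∀ x, |f x - ∑ i, a i * max ((∑ j, |W i j - x j|) + b i) 0| ≤ C * ε * L1 := by
  classical
  refine ⟨errConst d * ((d + 2) * 3), fun L1 hL f hf hfi ε hε => ?_⟩
  -- `K` is the number of neurons per bump; the mesh `K ε` makes up for it in the neuron count
  set K : ℝ := (d + 2) * 3 with hK
  have hK1 : 1 ≤ K := by rw [hK]; linarith [(Nat.cast_nonneg d : (0:ℝ) ≤ d)]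
  have hK0 : 0 < K := by linarith
  set η : ℝ := K * ε with hηdef
  have hη : 0 < η := by positivity
  obtain ⟨α, β, hαβ⟩ := bump_eq_relu d
  have hfinite : {k : Fin d → ℤ | (d + 1) * η * L1 ≤ |f fun j => η * k j|}.Finite := by
    by_contra hinf
    obtain ⟨n, hn⟩ := exists_nat_gt ((∫ x, |f x|) / (η ^ (d + 1) * L1))
    obtain ⟨T, hT, hcard⟩ := Set.Infinite.exists_subset_card_eq hinf n
    have h := card_mul_le hL hf hfi hη T fun k hk => hT hk
    rw [div_lt_iff₀ (by positivity), ← hcard] at hn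
    linarith
  set S := hfinite.toFinset with hSdef
  have hcard := card_mul_le hL hf hfi hη S fun k hk => by simpa [hSdef] using hk
  have herr := abs_sub_interp_le hL hf hη S fun k hk => by
    have : ¬ (d + 1) * η * L1 ≤ |f fun j => η * k j| := by simpa [hSdef] using hk
    exact (not_le.1 this).le
  let ι := S × (Fin (d + 2) × Fin 3)
  let e : Fin (Fintype.card ι) ≃ ι := (Fintype.equivFin ι).symm
  refine ⟨Fintype.card ι, fun i => (f fun j => η * (e i).1.1 j) * (α (e i).2 / η),
    fun i => η * β (e i).2, fun i j => η * (e i).1.1 j, ?_, fun x => ?_⟩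
  · have h1 : (Fintype.card ι : ℝ) = S.card * K := by
      simp [ι, hK]
    have h2 : K * (ε ^ (d + 1) * L1) ≤ η ^ (d + 1) * L1 := by
      rw [hηdef, mul_pow, mul_assoc (K ^ (d + 1))]
      exact mul_le_mul_of_nonneg_right (le_self_pow₀ hK1 d.succ_ne_zero) (by positivity)
    rw [h1, mul_assoc]
    exact (mul_le_mul_of_nonneg_left h2 (Nat.cast_nonneg _)).trans hcard
  · have hsum : ∑ i, (f fun j => η * (e i).1.1 j) * (α (e i).2 / η)
          * max ((∑ j, |η * (e i).1.1 j - x j|) + η * β (e i).2) 0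
        = ∑ k ∈ S, (f fun j => η * k j) * bump d (∑ j, |x j / η - k j|) := by
      let F : ι → ℝ := fun p => (f fun j => η * p.1.1 j) * (α p.2 / η)
        * max ((∑ j, |η * p.1.1 j - x j|) + η * β p.2) 0
      rw [← Finset.sum_coe_sort S]
      refine (e.sum_comp F).trans ((Fintype.sum_prod_type F).trans ?_)
      refine Finset.sum_congr rfl fun k _ => ?_
      rw [hαβ _ (Finset.sum_nonneg fun _ _ => abs_nonneg _), sum_relu_scale hη, Finset.mul_sum]
      exact Finset.sum_congr rfl fun t _ => mul_assoc _ _ _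
    rw [hsum]
    refine (herr x).trans (le_of_eq ?_)
    rw [hηdef]; ring

end AdderNet

/-! ### The approximation bound -/

/-- Approximation bound for single-hidden-layer AdderNets: for an `L₁`-Lipschitz (in ℓ¹)
integrable `f` and a probability measure `μ`, there is a single-hidden-layer AdderNet `A`
of width `N ≤ ‖f‖₁‖f‖_μ / min(ε^{d+2}L₁², ε^{d+1}L₁‖f‖_μ)` with
`∫ (f - A)² dμ ≤ C ε² L₁²`, with `C` depending only on `d`. -/
theorem addernet_single_hidden_layer_approximation_bound (d : ℕ) :
    ∃ C : ℝ, 0 < C ∧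
      ∀ (L1 : ℝ), 0 < L1 →
      ∀ f : (Fin d → ℝ) → ℝ,
        (∀ x x' : Fin d → ℝ, |f x - f x'| ≤ L1 * ∑ j, |x j - x' j|) →
        Integrable f volume →
        ∀ μ : Measure (Fin d → ℝ), IsProbabilityMeasure μ →
        ∀ ε : ℝ, 0 < ε →
          ∃ (N : ℕ) (a b : Fin N → ℝ) (W : Fin N → Fin d → ℝ),
            (N : ℝ) ≤ (∫ x, |f x|) * (∫ x, |f x| ∂μ) /
              min (ε ^ (d + 2) * L1 ^ 2) (ε ^ (d + 1) * L1 * ∫ x, |f x| ∂μ) ∧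
            (∫ x, (f x - ∑ i, a i * max ((∑ j, |W i j - x j|) + b i) 0) ^ 2 ∂μ) ≤
              C * ε ^ 2 * L1 ^ 2 := by
  obtain ⟨C, hC⟩ := AdderNet.exists_net d
  refine ⟨C ^ 2 + 1, by positivity, fun L1 hL f hf hfi μ hμ ε hε => ?_⟩
  have hM : 0 ≤ ∫ x, |f x| ∂μ := integral_nonneg fun x => abs_nonneg _
  rcases hM.eq_or_lt with hM0 | hMpos
  · -- `‖f‖_μ = 0`: the width bound is `x / 0 = 0`, so the empty network is forced
    have hcont : Continuous f := by
      refine (LipschitzWith.of_dist_le_mul (K := (L1 * d).toNNReal) fun x x' => ?_).continuous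
      rw [Real.dist_eq]
      refine (hf x x').trans ?_
      rw [Real.coe_toNNReal _ (by positivity), mul_assoc]
      refine mul_le_mul_of_nonneg_left ?_ hL.le
      refine (Finset.sum_le_sum (g := fun _ => dist x x') fun j _ => ?_).trans (by simp)
      rw [← Real.dist_eq]
      exact dist_le_pi_dist _ _ j
    -- a scale so large that the network of `exists_net` is empty shows that `f` is bounded
    obtain ⟨B, hB⟩ : ∃ B, ∀ x, |f x| ≤ B := by
      set I := ∫ x, |f x| with hI
      have hI0 : 0 ≤ I := integral_nonneg fun x => abs_nonneg _
      have hI1 : 1 ≤ (I / L1 + 1) := by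
        have : 0 ≤ I / L1 := by positivity
        linarith
      obtain ⟨N, a, b, W, hN, hA⟩ := hC L1 hL f hf hfi (I / L1 + 1) (by linarith)
      have hN0 : N = 0 := by
        by_contra h
        have h1 : (1 : ℝ) ≤ N := by exact_mod_cast Nat.one_le_iff_ne_zero.2 h
        have h2 : I / L1 + 1 ≤ (I / L1 + 1) ^ (d + 1) := le_self_pow₀ hI1 (by simp)
        have h3 : (I / L1 + 1) * L1 ≤ (I / L1 + 1) ^ (d + 1) * L1 :=
          mul_le_mul_of_nonneg_right h2 hL.le
        have h4 : (I / L1 + 1) * L1 = I + L1 := by field_simp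
        have h5 : 0 ≤ (I / L1 + 1) ^ (d + 1) * L1 := by positivity
        nlinarith
      subst hN0
      exact ⟨_, fun x => by simpa using hA x⟩
    have hint : Integrable (fun x => |f x|) μ :=
      Integrable.of_bound hcont.abs.aestronglyMeasurable B
        (ae_of_all _ fun x => by simpa using hB x)
    have hae := (integral_eq_zero_iff_of_nonneg (fun x => abs_nonneg (f x)) hint).1 hM0.symm
    refine ⟨0, Fin.elim0, Fin.elim0, Fin.elim0, ?_, ?_⟩
    · rw [← hM0]; simp
    · have : ∫ x, (f x - ∑ i : Fin 0, (Fin.elim0 i : ℝ)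
          * max ((∑ j, |(Fin.elim0 i : Fin d → ℝ) j - x j|) + Fin.elim0 i) 0) ^ 2 ∂μ = 0 := by
        refine integral_eq_zero_of_ae ?_
        filter_upwards [hae] with x hx
        have : f x = 0 := by simpa using hx
        simp [this]
      exact this.le.trans (by positivity)
  · obtain ⟨N, a, b, W, hN, hA⟩ := hC L1 hL f hf hfi ε hε
    refine ⟨N, a, b, W, ?_, ?_⟩
    · rw [le_div_iff₀ (lt_min (by positivity) (by positivity))]
      calc (N : ℝ) * min (ε ^ (d + 2) * L1 ^ 2) (ε ^ (d + 1) * L1 * ∫ x, |f x| ∂μ)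
          ≤ N * (ε ^ (d + 1) * L1 * ∫ x, |f x| ∂μ) :=
            mul_le_mul_of_nonneg_left (min_le_right _ _) (Nat.cast_nonneg _)
        _ = N * (ε ^ (d + 1) * L1) * ∫ x, |f x| ∂μ := by ring
        _ ≤ _ := mul_le_mul_of_nonneg_right hN hM
    · have hpt : ∀ x, (f x - ∑ i, a i * max ((∑ j, |W i j - x j|) + b i) 0) ^ 2
          ≤ C ^ 2 * ε ^ 2 * L1 ^ 2 := by
        intro x
        have h := pow_le_pow_left₀ (abs_nonneg _) (hA x) 2
        rw [sq_abs] at h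
        exact h.trans (le_of_eq (by ring))
      calc ∫ x, (f x - ∑ i, a i * max ((∑ j, |W i j - x j|) + b i) 0) ^ 2 ∂μ
          ≤ ∫ _x, C ^ 2 * ε ^ 2 * L1 ^ 2 ∂μ :=
            integral_mono_of_nonneg (ae_of_all _ fun x => sq_nonneg _) (integrable_const _)
              (ae_of_all _ hpt)
        _ = C ^ 2 * ε ^ 2 * L1 ^ 2 := by simp
        _ ≤ (C ^ 2 + 1) * ε ^ 2 * L1 ^ 2 := by
            have : 0 ≤ ε ^ 2 * L1 ^ 2 := by positivity
            nlinarith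
end
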